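/- arXiv:2510.04343 — 2 statements merged into one kernel-verified Lean document; each statement's English description precedes it below -/
import Mathlib

section
/- Let μ > 0 and 0 < d < 2μ. Then lim_{m→∞} sup_{p ≥ 0} inf_{P^m ∈ P(μ,d)^m} BUND(p,P^m)/m exists and equals μ − d/2. -/
/-!
The limit is squeezed between an exact upper bound, valid for every `m ≥ 1`, and a lower bound
coming from Chebyshev's inequality. Write `c = μ - d/2`.

*Upper bound* (`sInf_bund_le`). For `q ∈ (0,1)` let `twoPoint μ d q` put mass `q` on the high
point `μ + d/(2q)` and mass `1 - q` on the low point `μ - d/(2(1-q)) < c`; it lies in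
`MeanMAD μ d` once the low point is nonnegative. Against i.i.d. goods with this law, a price
`p ≤ m c` earns at most `p/m ≤ c` per good, and a price `p > m c` is met only if some
coordinate takes its high value, which has probability at most `m q`; the revenue per good is
then at most `p q`, and this is at most `c` for `q` small.

*Lower bound* (`le_bund`). The truncations `min(X_i, μ)` are independent, lie in `[0, μ]` and
have mean exactly `c`, because `min(x, μ) = (x + μ - |x - μ|)/2`. Chebyshev's inequality shows that
at price `m(c - ε)` a sale fails with probability at most `(μ/2)²/(m ε²)`, uniformly over the
ambiguity set.
-/

open MeasureTheory Filter Set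
open scoped ENNReal

noncomputable section

/-- The mean-MAD ambiguity set: Borel probability measures on `[0,∞)` (modeled as
probability measures on `ℝ` giving zero mass to `(-∞,0)`) with mean `μ` and
mean absolute deviation `d`. -/
def MeanMAD (μ d : ℝ) : Set (ProbabilityMeasure ℝ) :=
  {P | (P : Measure ℝ) (Set.Iio 0) = 0 ∧
       Integrable (fun x => x) (P : Measure ℝ) ∧
       (∫ x, x ∂(P : Measure ℝ)) = μ ∧
       (∫ x, |x - μ| ∂(P : Measure ℝ)) = d}

/-- A probability measure whose support consists of exactly two points. -/
def IsTwoPoint (P : ProbabilityMeasure ℝ) : Prop :=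
  ∃ x y : ℝ, x ≠ y ∧ (P : Measure ℝ) ({x, y} : Set ℝ)ᶜ = 0 ∧
    (P : Measure ℝ) {x} ≠ 0 ∧ (P : Measure ℝ) {y} ≠ 0

/-- The subset of the mean-MAD ambiguity set consisting of two-point distributions. -/
def MeanMAD2 (μ d : ℝ) : Set (ProbabilityMeasure ℝ) :=
  {P ∈ MeanMAD μ d | IsTwoPoint P}

/-- A deterministic mechanism for selling `m` goods: a measurable allocation rule with
values in `{0,1}^m` and a measurable nonnegative payment rule. -/
structure Mech (m : ℕ) where
  alloc : (Fin m → ℝ) → (Fin m → ℝ)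
  price : (Fin m → ℝ) → ℝ
  alloc_meas : Measurable alloc
  price_meas : Measurable price
  alloc01 : ∀ v i, alloc v i = 0 ∨ alloc v i = 1
  price_nonneg : ∀ v, 0 ≤ price v

/-- Truthfulness: incentive compatibility and individual rationality on `[0,∞)^m`. -/
def Truthful {m : ℕ} (D : Mech m) : Prop :=
  (∀ v w : Fin m → ℝ, (∀ i, 0 ≤ v i) → (∀ i, 0 ≤ w i) →
    (∑ i, D.alloc w i * v i) - D.price w ≤ (∑ i, D.alloc v i * v i) - D.price v) ∧
  (∀ v : Fin m → ℝ, (∀ i, 0 ≤ v i) → 0 ≤ (∑ i, D.alloc v i * v i) - D.price v)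

/-- Expected revenue of a mechanism under a joint distribution of valuations. -/
def REV {m : ℕ} (D : Mech m) (Pm : Measure (Fin m → ℝ)) : ℝ :=
  ∫ v, D.price v ∂Pm

/-- Revenue of the bundling mechanism with price `p`. -/
def BUND {m : ℕ} (p : ℝ) (Pm : Measure (Fin m → ℝ)) : ℝ :=
  p * (Pm {v | p ≤ ∑ i, v i}).toReal

/-- Optimal deterministic revenue for a known joint distribution. -/
def OPT (m : ℕ) (Pm : Measure (Fin m → ℝ)) : ℝ :=
  sSup {r | ∃ D : Mech m, Truthful D ∧ r = REV D Pm}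

/-- The joint (product) measure of a family of independent marginals. -/
def jointMeasure {m : ℕ} (P : Fin m → ProbabilityMeasure ℝ) : Measure (Fin m → ℝ) :=
  Measure.pi (fun i => (P i : Measure ℝ))

/-- Maximin value over deterministic truthful mechanisms. -/
def maximinVal (A : Set (ProbabilityMeasure ℝ)) (m : ℕ) : ℝ :=
  sSup {r | ∃ D : Mech m, Truthful D ∧
    r = sInf {s | ∃ P : Fin m → ProbabilityMeasure ℝ, (∀ i, P i ∈ A) ∧
      s = REV D (jointMeasure P) / m}}

/-- Minimax value over deterministic truthful mechanisms. -/
def minimaxVal (A : Set (ProbabilityMeasure ℝ)) (m : ℕ) : ℝ :=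
  sInf {r | ∃ P : Fin m → ProbabilityMeasure ℝ, (∀ i, P i ∈ A) ∧
    r = sSup {s | ∃ D : Mech m, Truthful D ∧ s = REV D (jointMeasure P) / m}}

/-- Maximin value of the bundling mechanism over nonnegative prices. -/
def bundMaximinVal (A : Set (ProbabilityMeasure ℝ)) (m : ℕ) : ℝ :=
  sSup {r | ∃ p : ℝ, 0 ≤ p ∧
    r = sInf {s | ∃ P : Fin m → ProbabilityMeasure ℝ, (∀ i, P i ∈ A) ∧
      s = BUND p (jointMeasure P) / m}}

/-- The law with mass `q` at `μ + d/(2q)` and mass `1 - q` at `μ - d/(2(1-q))`. -/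
def twoPoint (μ d q : ℝ) : Measure ℝ :=
  ENNReal.ofReal q • Measure.dirac (μ + d / (2 * q)) +
    ENNReal.ofReal (1 - q) • Measure.dirac (μ - d / (2 * (1 - q)))

lemma isProbabilityMeasure_twoPoint (μ d : ℝ) {q : ℝ} (hq0 : 0 < q) (hq1 : q < 1) :
    IsProbabilityMeasure (twoPoint μ d q) := by
  constructor
  simp only [twoPoint, Measure.add_apply, Measure.smul_apply, measure_univ, smul_eq_mul, mul_one]
  rw [← ENNReal.ofReal_add hq0.le (by linarith)]
  simp

lemma integrable_twoPoint (μ d q : ℝ) (f : ℝ → ℝ) : Integrable f (twoPoint μ d q) := by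
  refine Integrable.add_measure ?_ ?_ <;>
    exact (integrable_dirac (by simp)).smul_measure ENNReal.ofReal_ne_top

lemma integral_twoPoint (μ d : ℝ) {q : ℝ} (hq0 : 0 < q) (hq1 : q < 1) (f : ℝ → ℝ) :
    ∫ x, f x ∂(twoPoint μ d q) =
      q * f (μ + d / (2 * q)) + (1 - q) * f (μ - d / (2 * (1 - q))) := by
  rw [twoPoint, integral_add_measure]
  · simp [integral_smul_measure, integral_dirac, ENNReal.toReal_ofReal hq0.le,
      ENNReal.toReal_ofReal (sub_nonneg.2 hq1.le)]
  all_goals exact (integrable_dirac (by simp)).smul_measure ENNReal.ofReal_ne_top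

/-- The hypothesis `hx` says that the low point is nonnegative. -/
lemma twoPoint_mem_meanMAD {μ d q : ℝ} (hμ : 0 < μ) (hd0 : 0 < d) (hq0 : 0 < q) (hq1 : q < 1)
    (hx : d / (2 * (1 - q)) ≤ μ) :
    (⟨twoPoint μ d q, isProbabilityMeasure_twoPoint μ d hq0 hq1⟩ : ProbabilityMeasure ℝ) ∈
      MeanMAD μ d := by
  have hq1' : 0 < 1 - q := sub_pos.2 hq1
  have hA : 0 < d / (2 * q) := by positivity
  have hB : 0 < d / (2 * (1 - q)) := by positivity
  refine ⟨?_, integrable_twoPoint μ d q _, ?_, ?_⟩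
  · have h1 : ¬ (μ + d / (2 * q) < 0) := by linarith
    have h2 : ¬ (μ < d / (2 * (1 - q))) := by linarith
    simp [twoPoint, Measure.dirac_apply' _ measurableSet_Iio, h1, h2]
  · simp only [ProbabilityMeasure.coe_mk]
    rw [integral_twoPoint μ d hq0 hq1 (fun x => x)]
    field_simp
    ring
  · simp only [ProbabilityMeasure.coe_mk]
    rw [integral_twoPoint μ d hq0 hq1 (fun x => |x - μ|)]
    have e1 : |μ + d / (2 * q) - μ| = d / (2 * q) := by
      rw [add_sub_cancel_left, abs_of_pos hA]
    have e2 : |μ - d / (2 * (1 - q)) - μ| = d / (2 * (1 - q)) := by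
      rw [sub_sub_cancel_left, abs_neg, abs_of_pos hB]
    rw [e1, e2]
    field_simp
    ring

lemma twoPoint_Ioi_low {μ d q : ℝ} (hd0 : 0 < d) (hq0 : 0 < q) (hq1 : q < 1) :
    twoPoint μ d q (Ioi (μ - d / (2 * (1 - q)))) = ENNReal.ofReal q := by
  have hq1' : 0 < 1 - q := sub_pos.2 hq1
  have hA : 0 < d / (2 * q) := by positivity
  have hB : 0 < d / (2 * (1 - q)) := by positivity
  have h1 : μ - d / (2 * (1 - q)) < μ + d / (2 * q) := by linarith
  simp [twoPoint, Measure.dirac_apply' _ measurableSet_Ioi, h1]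

instance isProbabilityMeasure_jointMeasure {m : ℕ} (P : Fin m → ProbabilityMeasure ℝ) :
    IsProbabilityMeasure (jointMeasure P) := by
  unfold jointMeasure; infer_instance

lemma bund_nonneg {m : ℕ} {p : ℝ} (hp : 0 ≤ p) (Q : Measure (Fin m → ℝ)) : 0 ≤ BUND p Q :=
  mul_nonneg hp ENNReal.toReal_nonneg

/-- For each price, a suitable two-point law holds the revenue per good down to `μ - d/2`. -/
lemma exists_bund_le {μ d : ℝ} (hμ : 0 < μ) (hd0 : 0 < d) (hd : d < 2 * μ) {m : ℕ} (hm : 0 < m)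
    {p : ℝ} (hp : 0 ≤ p) :
    ∃ P : Fin m → ProbabilityMeasure ℝ, (∀ i, P i ∈ MeanMAD μ d) ∧
      BUND p (jointMeasure P) / m ≤ μ - d / 2 := by
  have hm' : (0 : ℝ) < m := by exact_mod_cast hm
  have hc : 0 < μ - d / 2 := by linarith
  -- This `q` makes both `p * q ≤ μ - d/2` and `μ * q ≤ μ - d/2` hold; the second inequality
  -- is the nonnegativity of the low point.
  obtain ⟨q, hq⟩ : ∃ q, q = (μ - d / 2) / (p + μ) := ⟨_, rfl⟩
  have hq0 : 0 < q := by rw [hq]; positivity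
  have hqm : q * (p + μ) = μ - d / 2 := by rw [hq]; field_simp
  have hpq : p * q ≤ μ - d / 2 := by nlinarith
  have hμq : μ * q ≤ μ - d / 2 := by nlinarith
  have hq1 : q < 1 := by nlinarith
  have hq1' : 0 < 1 - q := sub_pos.2 hq1
  have hx : d / (2 * (1 - q)) ≤ μ := by
    rw [div_le_iff₀ (by positivity)]; nlinarith
  refine ⟨fun _ => ⟨twoPoint μ d q, isProbabilityMeasure_twoPoint μ d hq0 hq1⟩,
    fun _ => twoPoint_mem_meanMAD hμ hd0 hq0 hq1 hx, ?_⟩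
  set P : Fin m → ProbabilityMeasure ℝ :=
    fun _ => ⟨twoPoint μ d q, isProbabilityMeasure_twoPoint μ d hq0 hq1⟩ with hP
  rw [div_le_iff₀ hm']
  rcases le_or_gt p ((μ - d / 2) * m) with h | h
  · refine le_trans ?_ h
    exact mul_le_of_le_one_right hp (measureReal_le_one (μ := jointMeasure P))
  · have hlow : μ - d / (2 * (1 - q)) ≤ μ - d / 2 := by
      have : d / 2 ≤ d / (2 * (1 - q)) := by
        apply div_le_div_of_nonneg_left hd0.le (by positivity); linarith
      linarith
    -- A price above `m (μ - d/2)` is reached only if some coordinate exceeds the low point.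
    have hsub : {v : Fin m → ℝ | p ≤ ∑ i, v i} ⊆
        ⋃ i, Function.eval i ⁻¹' Ioi (μ - d / (2 * (1 - q))) := by
      intro v hv
      by_contra hcon
      simp only [mem_iUnion, mem_preimage, Function.eval, mem_Ioi, not_exists, not_lt] at hcon
      have h1 : ∑ i, v i ≤ ∑ _i : Fin m, (μ - d / 2) :=
        Finset.sum_le_sum fun i _ => (hcon i).trans hlow
      simp only [Finset.sum_const, Finset.card_univ, Fintype.card_fin, nsmul_eq_mul] at h1
      have hv' : p ≤ ∑ i, v i := hv
      linarith
    have hmeas : jointMeasure P {v : Fin m → ℝ | p ≤ ∑ i, v i} ≤ m * ENNReal.ofReal q := by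
      refine (measure_mono hsub).trans ((measure_iUnion_fintype_le _ _).trans ?_)
      have hi : ∀ i, jointMeasure P (Function.eval i ⁻¹' Ioi (μ - d / (2 * (1 - q)))) =
          ENNReal.ofReal q := by
        intro i
        rw [jointMeasure, (measurePreserving_eval (fun i => (P i : Measure ℝ)) i).measure_preimage
          measurableSet_Ioi.nullMeasurableSet]
        exact twoPoint_Ioi_low hd0 hq0 hq1
      simp [hi]
    have hreal : (jointMeasure P {v : Fin m → ℝ | p ≤ ∑ i, v i}).toReal ≤ m * q := by
      refine (ENNReal.toReal_mono (by finiteness) hmeas).trans ?_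
      simp [ENNReal.toReal_mul, ENNReal.toReal_ofReal hq0.le]
    calc BUND p (jointMeasure P) ≤ p * (m * q) := mul_le_mul_of_nonneg_left hreal hp
      _ = p * q * m := by ring
      _ ≤ (μ - d / 2) * m := mul_le_mul_of_nonneg_right hpq hm'.le

lemma sInf_bund_le {μ d : ℝ} (hμ : 0 < μ) (hd0 : 0 < d) (hd : d < 2 * μ) {m : ℕ} (hm : 0 < m)
    {p : ℝ} (hp : 0 ≤ p) :
    sInf {s | ∃ P : Fin m → ProbabilityMeasure ℝ, (∀ i, P i ∈ MeanMAD μ d) ∧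
      s = BUND p (jointMeasure P) / m} ≤ μ - d / 2 := by
  obtain ⟨P, hP, hle⟩ := exists_bund_le hμ hd0 hd hm hp
  refine le_trans (csInf_le ⟨0, ?_⟩ ⟨P, hP, rfl⟩) hle
  rintro s ⟨R, -, rfl⟩
  exact div_nonneg (bund_nonneg hp _) (Nat.cast_nonneg m)

lemma integral_min_of_mem_meanMAD {μ d : ℝ} {P : ProbabilityMeasure ℝ} (hP : P ∈ MeanMAD μ d) :
    ∫ x, min x μ ∂(P : Measure ℝ) = μ - d / 2 := by
  obtain ⟨-, hXint, hmean, hmad⟩ := hP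
  have habs : Integrable (fun x => |x - μ|) (P : Measure ℝ) :=
    (hXint.sub (integrable_const μ)).abs
  have e : ∀ x : ℝ, min x μ = (x + μ - |x - μ|) / 2 := by
    intro x
    rcases le_total x μ with h | h
    · rw [min_eq_left h, abs_of_nonpos (by linarith)]; ring
    · rw [min_eq_right h, abs_of_nonneg (by linarith)]; ring
  simp_rw [e]
  have hadd : Integrable (fun x => x + μ) (P : Measure ℝ) := hXint.add (integrable_const μ)
  rw [integral_div, integral_sub hadd habs,
    integral_add hXint (integrable_const μ), hmean, hmad]
  simp
  ring

lemma min_mem_Icc_of_mem_meanMAD {μ d : ℝ} (hμ : 0 < μ) {P : ProbabilityMeasure ℝ}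
    (hP : P ∈ MeanMAD μ d) : ∀ᵐ x ∂(P : Measure ℝ), min x μ ∈ Icc 0 μ := by
  have h : ∀ᵐ x ∂(P : Measure ℝ), x ∉ Iio 0 := measure_eq_zero_iff_ae_notMem.1 hP.1
  filter_upwards [h] with x hx
  exact ⟨le_min (not_lt.1 hx) hμ.le, min_le_right _ _⟩

/-- Chebyshev's inequality for the truncated sum, which bounds the probability that the price
`m (μ - d/2 - ε)` is not reached. -/
lemma measure_sum_lt_le {μ d ε : ℝ} (hμ : 0 < μ) (hε : 0 < ε) {m : ℕ} (hm : 0 < m)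
    {P : Fin m → ProbabilityMeasure ℝ} (hP : ∀ i, P i ∈ MeanMAD μ d) :
    (jointMeasure P).real {v | m * (μ - d / 2 - ε) ≤ ∑ i, v i}ᶜ ≤ (μ / 2) ^ 2 / ε ^ 2 / m := by
  have hm' : (0 : ℝ) < m := by exact_mod_cast hm
  have hmeas : Measurable (fun x : ℝ => min x μ) := by fun_prop
  have hLp : ∀ i, MemLp (fun x : ℝ => min x μ) 2 (P i : Measure ℝ) := fun i =>
    memLp_of_bounded (min_mem_Icc_of_mem_meanMAD hμ (hP i)) hmeas.aestronglyMeasurable 2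
  have hLp' : ∀ i, MemLp (fun v : Fin m → ℝ => min (v i) μ) 2 (jointMeasure P) := fun i =>
    (hLp i).comp_measurePreserving (measurePreserving_eval (fun i => (P i : Measure ℝ)) i)
  set Y : (Fin m → ℝ) → ℝ := ∑ i, fun v => min (v i) μ with hY
  have hYapp : ∀ v, Y v = ∑ i, min (v i) μ := fun v => by simp [hY, Finset.sum_apply]
  have hYLp : MemLp Y 2 (jointMeasure P) := memLp_finsetSum' _ fun i _ => hLp' i
  have hYmean : ∫ v, Y v ∂(jointMeasure P) = m * (μ - d / 2) := by
    simp_rw [hYapp]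
    rw [integral_finsetSum _ fun i _ => (hLp' i).integrable one_le_two]
    have hi : ∀ i, ∫ v, min (v i) μ ∂(jointMeasure P) = μ - d / 2 := fun i => by
      rw [jointMeasure, integral_comp_eval (μ := fun i => (P i : Measure ℝ))
        (f := fun x : ℝ => min x μ) hmeas.aestronglyMeasurable]
      exact integral_min_of_mem_meanMAD (hP i)
    simp only [hi, Finset.sum_const, Finset.card_univ, Fintype.card_fin, nsmul_eq_mul]
  have hYvar : ProbabilityTheory.variance Y (jointMeasure P) ≤ m * (μ / 2) ^ 2 := by
    rw [hY, jointMeasure, ProbabilityTheory.variance_sum_pi (X := fun _ x => min x μ) hLp]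
    calc _ ≤ ∑ _i : Fin m, (μ / 2) ^ 2 := Finset.sum_le_sum fun i _ => by
          simpa using ProbabilityTheory.variance_le_sq_of_bounded
            (min_mem_Icc_of_mem_meanMAD hμ (hP i)) hmeas.aemeasurable
      _ = _ := by simp
  have hsub : {v : Fin m → ℝ | m * (μ - d / 2 - ε) ≤ ∑ i, v i}ᶜ ⊆
      {v | m * ε ≤ |Y v - ∫ w, Y w ∂(jointMeasure P)|} := by
    intro v hv
    simp only [mem_compl_iff, mem_ofPred_eq, not_le] at hv ⊢
    have h1 : Y v ≤ ∑ i, v i := by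
      rw [hYapp]; exact Finset.sum_le_sum fun i _ => min_le_left _ _
    rw [hYmean, abs_sub_comm]
    refine le_trans ?_ (le_abs_self _)
    nlinarith
  have hcheb := ProbabilityTheory.meas_ge_le_variance_div_sq hYLp (mul_pos hm' hε)
  have hreal : (jointMeasure P).real {v | m * (μ - d / 2 - ε) ≤ ∑ i, v i}ᶜ ≤
      ProbabilityTheory.variance Y (jointMeasure P) / (m * ε) ^ 2 :=
    ENNReal.toReal_le_of_le_ofReal
      (div_nonneg (ProbabilityTheory.variance_nonneg _ _) (sq_nonneg _))
      ((measure_mono hsub).trans hcheb)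
  refine hreal.trans ((div_le_div_of_nonneg_right hYvar (sq_nonneg _)).trans (le_of_eq ?_))
  field_simp

/-- At price `m (μ - d/2 - ε)` the revenue per good is at least a quantity, independent of the
laws in the ambiguity set, that tends to `μ - d/2 - ε`. -/
lemma le_bund {μ d ε : ℝ} (hμ : 0 < μ) (hε : 0 < ε) (hεc : ε < μ - d / 2) {m : ℕ} (hm : 0 < m)
    {P : Fin m → ProbabilityMeasure ℝ} (hP : ∀ i, P i ∈ MeanMAD μ d) :
    (μ - d / 2 - ε) * (1 - (μ / 2) ^ 2 / ε ^ 2 / m) ≤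
      BUND (m * (μ - d / 2 - ε)) (jointMeasure P) / m := by
  have hm' : (0 : ℝ) < m := by exact_mod_cast hm
  have hms : MeasurableSet {v : Fin m → ℝ | m * (μ - d / 2 - ε) ≤ ∑ i, v i} :=
    measurableSet_le measurable_const (by fun_prop)
  have h := measure_sum_lt_le hμ hε hm hP
  rw [probReal_compl_eq_one_sub hms] at h
  rw [le_div_iff₀ hm', BUND]
  change _ ≤ m * (μ - d / 2 - ε) * (jointMeasure P).real {v | m * (μ - d / 2 - ε) ≤ ∑ i, v i}
  have hpos : 0 ≤ m * (μ - d / 2 - ε) := mul_nonneg hm'.le (by linarith)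
  calc _ = m * (μ - d / 2 - ε) * (1 - (μ / 2) ^ 2 / ε ^ 2 / m) := by ring
    _ ≤ _ := mul_le_mul_of_nonneg_left (by linarith) hpos

lemma bundMaximinVal_le {μ d : ℝ} (hμ : 0 < μ) (hd0 : 0 < d) (hd : d < 2 * μ) {m : ℕ}
    (hm : 0 < m) : bundMaximinVal (MeanMAD μ d) m ≤ μ - d / 2 := by
  refine csSup_le ⟨_, 0, le_rfl, rfl⟩ ?_
  rintro r ⟨p, hp, rfl⟩
  exact sInf_bund_le hμ hd0 hd hm hp

lemma le_bundMaximinVal {μ d ε : ℝ} (hμ : 0 < μ) (hd0 : 0 < d) (hd : d < 2 * μ) (hε : 0 < ε)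
    (hεc : ε < μ - d / 2) {m : ℕ} (hm : 0 < m) :
    (μ - d / 2 - ε) * (1 - (μ / 2) ^ 2 / ε ^ 2 / m) ≤ bundMaximinVal (MeanMAD μ d) m := by
  have hp : 0 ≤ m * (μ - d / 2 - ε) := mul_nonneg (Nat.cast_nonneg m) (by linarith)
  refine le_trans ?_ (le_csSup ⟨μ - d / 2, ?_⟩ ⟨m * (μ - d / 2 - ε), hp, rfl⟩)
  · obtain ⟨P, hP, -⟩ := exists_bund_le hμ hd0 hd hm hp
    refine le_csInf ⟨_, P, hP, rfl⟩ ?_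
    rintro s ⟨R, hR, rfl⟩
    exact le_bund hμ hε hεc hm hR
  · rintro r ⟨p, hp, rfl⟩
    exact sInf_bund_le hμ hd0 hd hm hp

/-- Lemma 1 (maximin analysis of bundling): for all `0 < d < 2μ`, the normalized maximin
bundling value converges to `μ - d/2` as the number of goods grows. -/
theorem bundMaximin_tendsto (μ d : ℝ) (hμ : 0 < μ) (hd0 : 0 < d) (hd : d < 2 * μ) :
    Tendsto (fun m : ℕ => bundMaximinVal (MeanMAD μ d) m) atTop (nhds (μ - d / 2)) := by
  have hc : 0 < μ - d / 2 := by linarith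
  refine tendsto_order.2 ⟨fun a ha => ?_, fun a ha => ?_⟩
  · obtain ⟨ε, hε⟩ : ∃ ε, ε = min (μ - d / 2 - a) (μ - d / 2) / 2 := ⟨_, rfl⟩
    have hmin : 0 < min (μ - d / 2 - a) (μ - d / 2) := lt_min (by linarith) hc
    have hε0 : 0 < ε := by linarith
    have hεc : ε < μ - d / 2 := by linarith [min_le_right (μ - d / 2 - a) (μ - d / 2)]
    have hεa : a < μ - d / 2 - ε := by linarith [min_le_left (μ - d / 2 - a) (μ - d / 2)]
    have hlim : Tendsto (fun m : ℕ => (μ - d / 2 - ε) * (1 - (μ / 2) ^ 2 / ε ^ 2 / (m : ℝ)))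
        atTop (nhds (μ - d / 2 - ε)) := by
      simpa using ((tendsto_const_div_atTop_nhds_zero_nat ((μ / 2) ^ 2 / ε ^ 2)).const_sub
        1).const_mul (μ - d / 2 - ε)
    filter_upwards [hlim.eventually_const_lt hεa, eventually_gt_atTop 0] with m hm1 hm
    exact hm1.trans_le (le_bundMaximinVal hμ hd0 hd hε0 hεc hm)
  · filter_upwards [eventually_gt_atTop 0] with m hm
    exact (bundMaximinVal_le hμ hd0 hd hm).trans_lt ha

end
end

section
/- Let μ > 0 and 0 < d < 2μ. Then lim_{m→∞} sup_{p ≥ 0} inf_{P^m ∈ P(μ,d)^m} BUND(p,P^m)/OPT(m,P^m) and lim_{m→∞} sup_{p ≥ 0} inf_{P^m ∈ P₂(μ,d)^m} BUND(p,P^m)/OPT(m,P^m) both exist and both equal 1 − d/(2μ). -/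
/-!
Every truthful mechanism extracts at most the total mean `m μ`, and bundling at any price is itself
truthful, so `BUND ≤ OPT ≤ m μ` (`BUND_le_OPT`, `OPT_le`).

*Lower bound.* Since `min x μ = (x + μ - |x - μ|) / 2`, the truncated valuations lie in `[0, μ]` and
have mean `μ - d / 2` under every marginal in the ambiguity set. Chebyshev's inequality shows that
their sum exceeds any price `m K` with `K < μ - d / 2` with probability `1 - O(1/m)`, uniformly in
the marginals. Dividing by `OPT ≤ m μ` gives ratios arbitrarily close to `(μ - d / 2) / μ`
(`eventually_le_sInf`).

*Upper bound.* At a price `p ≥ m (μ - d / 2)` consider the two-point law with a tiny mass `q` on its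
upper atom. Its lower atom is below `μ - d / 2`, so a sale has probability at most `m q`, while `OPT`
stays bounded away from `0`; hence the infimum of the ratio is `0` (`sInf_le_of_high_price`). At a
lower price, `BUND ≤ m (μ - d / 2)`, whereas for one fixed two-point law the total valuation
concentrates at `m μ` and `OPT ≥ m L` eventually for each `L < μ` (`eventually_sInf_le`).

The lower bound holds on the full ambiguity set and the upper bound uses two-point laws only, so both
limits follow from `ratio_tendsto_of_between`.
-/

open MeasureTheory Filter Set
open scoped ENNReal

noncomputable section

/-- Maximin value of the ratio objective for the bundling mechanism. -/
def ratioVal (A : Set (ProbabilityMeasure ℝ)) (m : ℕ) : ℝ :=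
  sSup {r | ∃ p : ℝ, 0 ≤ p ∧
    r = sInf {s | ∃ P : Fin m → ProbabilityMeasure ℝ, (∀ i, P i ∈ A) ∧
      s = BUND p (jointMeasure P) / OPT m (jointMeasure P)}}

/-! ### Revenue bounds: bundling revenue ≤ optimal revenue ≤ total mean -/

instance isProbabilityMeasure_joint {m : ℕ} (P : Fin m → ProbabilityMeasure ℝ) :
    IsProbabilityMeasure (jointMeasure P) := by
  unfold jointMeasure; infer_instance

lemma ae_joint {m : ℕ} (P : Fin m → ProbabilityMeasure ℝ) {Q : ℝ → Prop}
    (h : ∀ i, ∀ᵐ x ∂(P i : Measure ℝ), Q x) :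
    ∀ᵐ v ∂(jointMeasure P), ∀ i, Q (v i) := by
  rw [ae_all_iff]
  intro i
  exact (measurePreserving_eval (fun i => (P i : Measure ℝ)) i).quasiMeasurePreserving.ae (h i)

lemma ae_nonneg_of_mem {μ d : ℝ} {P : ProbabilityMeasure ℝ} (h : P ∈ MeanMAD μ d) :
    ∀ᵐ x ∂(P : Measure ℝ), 0 ≤ x := by
  rw [ae_iff]
  simpa [Set.Iio] using h.1

/-- Individual rationality and `alloc ≤ 1` bound the payment by the total valuation. -/
lemma REV_le {μ d : ℝ} {m : ℕ} {P : Fin m → ProbabilityMeasure ℝ}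
    (hP : ∀ i, P i ∈ MeanMAD μ d) {D : Mech m} (hD : Truthful D) :
    REV D (jointMeasure P) ≤ m * μ := by
  have hint : ∀ i : Fin m, Integrable (fun v : Fin m → ℝ => v i) (jointMeasure P) :=
    fun i => integrable_comp_eval (μ := fun i => (P i : Measure ℝ)) (f := fun x => x) (hP i).2.1
  have hval : ∀ i : Fin m, ∫ v : Fin m → ℝ, v i ∂(jointMeasure P) = μ := by
    intro i
    rw [← (hP i).2.2.1]
    exact integral_comp_eval (μ := fun i => (P i : Measure ℝ)) (f := fun x => x)
      (hP i).2.1.aestronglyMeasurable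
  have hsum : ∫ v : Fin m → ℝ, ∑ i, v i ∂(jointMeasure P) = m * μ := by
    rw [integral_finsetSum _ (fun i _ => hint i)]
    simp [hval]
  rw [← hsum]
  refine integral_mono_of_nonneg (ae_of_all _ D.price_nonneg)
    (integrable_finsetSum _ (fun i _ => hint i)) ?_
  filter_upwards [ae_joint P (fun i => ae_nonneg_of_mem (hP i))] with v hv
  have h1 : ∑ i, D.alloc v i * v i ≤ ∑ i, v i := by
    refine Finset.sum_le_sum fun i _ => ?_
    rcases D.alloc01 v i with h | h <;> simp [h, hv i]
  linarith [hD.2 v hv]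

/-- The mechanism offering the full bundle at price `p`. -/
def bundMech (m : ℕ) (p : ℝ) (hp : 0 ≤ p) : Mech m where
  alloc := fun v _ => if p ≤ ∑ i, v i then 1 else 0
  price := fun v => if p ≤ ∑ i, v i then p else 0
  alloc_meas := by
    refine measurable_pi_lambda _ fun i => Measurable.ite ?_ measurable_const measurable_const
    exact measurableSet_le measurable_const (by fun_prop)
  price_meas := by
    refine Measurable.ite ?_ measurable_const measurable_const
    exact measurableSet_le measurable_const (by fun_prop)
  alloc01 := by
    intro v i
    by_cases h : p ≤ ∑ i, v i <;> simp [h]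
  price_nonneg := by
    intro v
    split_ifs <;> simp [hp]

lemma bundMech_truthful (m : ℕ) (p : ℝ) (hp : 0 ≤ p) : Truthful (bundMech m p hp) := by
  constructor
  · intro v w _ _
    simp only [bundMech, ← Finset.mul_sum]
    split_ifs <;> linarith
  · intro v _
    simp only [bundMech, ← Finset.mul_sum]
    split_ifs <;> linarith

lemma REV_bundMech {m : ℕ} (p : ℝ) (hp : 0 ≤ p) (Pm : Measure (Fin m → ℝ)) :
    REV (bundMech m p hp) Pm = BUND p Pm := by
  have hm : MeasurableSet {v : Fin m → ℝ | p ≤ ∑ i, v i} :=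
    measurableSet_le measurable_const (by fun_prop)
  have : (bundMech m p hp).price = {v : Fin m → ℝ | p ≤ ∑ i, v i}.indicator (fun _ => p) := by
    funext v
    simp [bundMech, Set.indicator]
  unfold REV BUND
  rw [this, integral_indicator_const _ hm, smul_eq_mul, mul_comm]
  rfl

lemma BUND_le_OPT {μ d : ℝ} {m : ℕ} {P : Fin m → ProbabilityMeasure ℝ}
    (hP : ∀ i, P i ∈ MeanMAD μ d) {p : ℝ} (hp : 0 ≤ p) :
    BUND p (jointMeasure P) ≤ OPT m (jointMeasure P) := by
  refine le_csSup ⟨m * μ, ?_⟩ ⟨bundMech m p hp, bundMech_truthful m p hp, (REV_bundMech p hp _).symm⟩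
  rintro r ⟨D, hD, rfl⟩
  exact REV_le hP hD

lemma OPT_le {μ d : ℝ} {m : ℕ} {P : Fin m → ProbabilityMeasure ℝ}
    (hP : ∀ i, P i ∈ MeanMAD μ d) : OPT m (jointMeasure P) ≤ m * μ := by
  refine csSup_le ⟨_, bundMech m 0 le_rfl, bundMech_truthful m 0 le_rfl, rfl⟩ ?_
  rintro r ⟨D, hD, rfl⟩
  exact REV_le hP hD

lemma BUND_nonneg {m : ℕ} {p : ℝ} (hp : 0 ≤ p) (Pm : Measure (Fin m → ℝ)) : 0 ≤ BUND p Pm :=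
  mul_nonneg hp ENNReal.toReal_nonneg

lemma BUND_le {m : ℕ} {p : ℝ} (hp : 0 ≤ p) (Pm : Measure (Fin m → ℝ)) [IsProbabilityMeasure Pm] :
    BUND p Pm ≤ p :=
  mul_le_of_le_one_right hp measureReal_le_one

lemma OPT_nonneg {μ d : ℝ} {m : ℕ} {P : Fin m → ProbabilityMeasure ℝ}
    (hP : ∀ i, P i ∈ MeanMAD μ d) : 0 ≤ OPT m (jointMeasure P) :=
  (BUND_nonneg le_rfl _).trans (BUND_le_OPT hP le_rfl)

/-! ### Concentration of the total valuation -/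

/-- Chebyshev's inequality for `∑ f (v i)`, where `f` is a bounded minorant of the identity. -/
lemma prob_sum_ge {m : ℕ} {B c K : ℝ} (hm : 0 < m) (hK : K < c)
    (P : Fin m → ProbabilityMeasure ℝ) (f : ℝ → ℝ) (hf : Measurable f)
    (hB : ∀ i, ∀ᵐ x ∂(P i : Measure ℝ), f x ∈ Set.Icc 0 B ∧ f x ≤ x)
    (hc : ∀ i, ∫ x, f x ∂(P i : Measure ℝ) = c) :
    1 - B ^ 2 / (4 * (c - K) ^ 2) / m ≤
      ((jointMeasure P) {v | m * K ≤ ∑ i, v i}).toReal := by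
  have hm' : (0 : ℝ) < m := by exact_mod_cast hm
  have hcK : 0 < c - K := by linarith
  have hLp : ∀ i, MemLp f 2 (P i : Measure ℝ) := fun i =>
    MemLp.of_bound hf.aestronglyMeasurable B (by
      filter_upwards [hB i] with x hx
      rw [Real.norm_eq_abs, abs_of_nonneg hx.1.1]; exact hx.1.2)
  set X : (Fin m → ℝ) → ℝ := ∑ i, fun v => f (v i) with hX
  have hXLp : MemLp X 2 (jointMeasure P) :=
    memLp_finsetSum' _ fun i _ =>
      (hLp i).comp_measurePreserving (measurePreserving_eval (fun i => (P i : Measure ℝ)) i)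
  have hmean : ∫ v, X v ∂(jointMeasure P) = m * c := by
    have : ∀ i, ∫ v : Fin m → ℝ, f (v i) ∂(jointMeasure P) = c := fun i => by
      rw [← hc i]
      exact integral_comp_eval (μ := fun i => (P i : Measure ℝ)) hf.aestronglyMeasurable
    simp only [hX, Finset.sum_apply]
    rw [integral_finsetSum]
    · simp [this]
    · intro i _
      exact integrable_comp_eval (μ := fun i => (P i : Measure ℝ)) ((hLp i).integrable (by norm_num))
  have hvar : ProbabilityTheory.variance X (jointMeasure P) ≤ m * (B / 2) ^ 2 := by
    have h1 := ProbabilityTheory.variance_sum_pi (μ := fun i => (P i : Measure ℝ))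
      (X := fun _ => f) hLp
    have h2 : ProbabilityTheory.variance X (jointMeasure P) =
      ∑ i, ProbabilityTheory.variance f (P i : Measure ℝ) := h1
    rw [h2]
    calc _ ≤ ∑ _i : Fin m, (B / 2) ^ 2 := Finset.sum_le_sum fun i _ => by
            have := ProbabilityTheory.variance_le_sq_of_bounded (a := 0) (b := B)
              ((hB i).mono fun x hx => hx.1) hf.aemeasurable
            simpa using this
      _ = _ := by simp
  have hcheb := ProbabilityTheory.meas_ge_le_variance_div_sq hXLp (c := m * (c - K)) (by positivity)
  rw [hmean] at hcheb
  set E : Set (Fin m → ℝ) := {v | m * K ≤ ∑ i, v i} with hE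
  have hEm : MeasurableSet E := measurableSet_le measurable_const (by fun_prop)
  have hsub : (jointMeasure P) Eᶜ ≤ (jointMeasure P) {v | m * (c - K) ≤ |X v - m * c|} := by
    refine measure_mono_ae ?_
    filter_upwards [ae_joint P hB] with v hv hvE
    have h1 : ∑ i, v i < m * K := not_le.mp hvE
    have h2 : X v ≤ ∑ i, v i := by
      simp only [hX, Finset.sum_apply]
      exact Finset.sum_le_sum fun i _ => (hv i).2
    change m * (c - K) ≤ |X v - m * c|
    rw [abs_sub_comm]
    exact le_trans (by linarith) (le_abs_self _)
  have hreal : (jointMeasure P).real Eᶜ ≤ B ^ 2 / (4 * (c - K) ^ 2) / m := by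
    have h3 := ENNReal.toReal_mono ENNReal.ofReal_ne_top (hsub.trans hcheb)
    rw [ENNReal.toReal_ofReal (div_nonneg (ProbabilityTheory.variance_nonneg _ _) (sq_nonneg _))]
      at h3
    refine h3.trans ?_
    calc _ ≤ m * (B / 2) ^ 2 / (m * (c - K)) ^ 2 := by gcongr
      _ = _ := by field_simp; norm_num
  rw [probReal_compl_eq_one_sub hEm] at hreal
  change _ ≤ (jointMeasure P).real E
  linarith

/-- If a bounded minorant of the identity has mean `c` under all marginals, then per-good bundling
revenue `L` is reached for any `L < c`, uniformly in the marginals, at one per-good price `K`. -/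
lemma exists_price {B c L : ℝ} (hc : 0 < c) (hL : L < c) :
    ∃ K, 0 ≤ K ∧ ∀ᶠ m : ℕ in atTop, ∀ (P : Fin m → ProbabilityMeasure ℝ) (f : ℝ → ℝ),
      Measurable f →
      (∀ i, ∀ᵐ x ∂(P i : Measure ℝ), f x ∈ Set.Icc 0 B ∧ f x ≤ x) →
      (∀ i, ∫ x, f x ∂(P i : Measure ℝ) = c) →
      m * L ≤ BUND (m * K) (jointMeasure P) := by
  obtain ⟨K, hK1, hK2⟩ := exists_between (max_lt hL hc)
  have hLK : L < K := (le_max_left _ _).trans_lt hK1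
  have hK0 : 0 < K := (le_max_right _ _).trans_lt hK1
  refine ⟨K, hK0.le, ?_⟩
  have hlim : Tendsto (fun m : ℕ => K * (1 - B ^ 2 / (4 * (c - K) ^ 2) / m)) atTop (nhds K) := by
    have := (tendsto_const_div_atTop_nhds_zero_nat (B ^ 2 / (4 * (c - K) ^ 2))).const_sub 1
    simpa using this.const_mul K
  filter_upwards [hlim.eventually (lt_mem_nhds hLK), eventually_gt_atTop 0] with m h1 hm P f hf hB hcc
  have h2 := prob_sum_ge hm hK2 P f hf hB hcc
  unfold BUND
  rw [mul_assoc]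
  refine mul_le_mul_of_nonneg_left (h1.le.trans ?_) (Nat.cast_nonneg m)
  exact mul_le_mul_of_nonneg_left h2 hK0.le

/-! ### Truncated means and two-point distributions -/

lemma integral_min {μ d : ℝ} {P : ProbabilityMeasure ℝ} (h : P ∈ MeanMAD μ d) :
    ∫ x, min x μ ∂(P : Measure ℝ) = μ - d / 2 := by
  have h1 : ∀ x : ℝ, min x μ = (x + μ - |x - μ|) / 2 := fun x => by
    rcases le_total x μ with hx | hx
    · rw [min_eq_left hx, abs_of_nonpos (by linarith)]; ring
    · rw [min_eq_right hx, abs_of_nonneg (by linarith)]; ring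
  obtain ⟨_, hi, hmean, hmad⟩ := h
  simp only [h1]
  have h2 : Integrable (fun x : ℝ => x + μ) (P : Measure ℝ) := hi.add (integrable_const μ)
  have h3 : Integrable (fun x : ℝ => |x - μ|) (P : Measure ℝ) := (hi.sub (integrable_const μ)).abs
  rw [integral_div, integral_sub h2 h3, integral_add hi (integrable_const μ), hmean, hmad]
  simp
  ring

/-- The lower atom of the two-point law with mean `μ`, MAD `d` and mass `q` on its upper atom. -/
def lo (μ d q : ℝ) : ℝ := μ - d / (2 * (1 - q))

/-- The upper atom of the two-point law with mean `μ`, MAD `d` and mass `q` on its upper atom. -/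
def hi (μ d q : ℝ) : ℝ := μ + d / (2 * q)

lemma lo_extreme {μ d : ℝ} (hd0 : 0 < d) : lo μ d (1 - d / (2 * μ)) = 0 := by
  have : 2 * (1 - (1 - d / (2 * μ))) = d / μ := by ring
  rw [lo, this, div_div_cancel₀ hd0.ne', sub_self]

/-- The law `(1 - q) δ_lo + q δ_hi` belongs to the two-point ambiguity set. -/
lemma exists_twoPoint {μ d q : ℝ} (hd0 : 0 < d) (hq0 : 0 < q) (hq1 : q < 1)
    (hlo : 0 ≤ lo μ d q) :
    ∃ P ∈ MeanMAD2 μ d, (∀ᵐ x ∂(P : Measure ℝ), x = lo μ d q ∨ x = hi μ d q) ∧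
      (P : Measure ℝ).real {lo μ d q}ᶜ = q := by
  have hq1' : 0 < 1 - q := by linarith
  have hx : lo μ d q < μ := by unfold lo; linarith [show 0 < d / (2 * (1 - q)) by positivity]
  have hy : μ < hi μ d q := by unfold hi; linarith [show 0 < d / (2 * q) by positivity]
  set x := lo μ d q with hxdef
  set y := hi μ d q with hydef
  have hxy : x ≠ y := (hx.trans hy).ne
  let M : Measure ℝ := ENNReal.ofReal (1 - q) • Measure.dirac x + ENNReal.ofReal q • Measure.dirac y
  have hMp : IsProbabilityMeasure M := ⟨by
    simp only [M, Measure.add_apply, Measure.smul_apply, measure_univ, smul_eq_mul, mul_one]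
    rw [← ENNReal.ofReal_add hq1'.le hq0.le]; simp⟩
  have hintg : ∀ g : ℝ → ℝ, Integrable g M ∧ ∫ t, g t ∂M = (1 - q) * g x + q * g y := by
    intro g
    have i1 : Integrable g (ENNReal.ofReal (1 - q) • Measure.dirac x) :=
      (integrable_dirac (by simp)).smul_measure ENNReal.ofReal_ne_top
    have i2 : Integrable g (ENNReal.ofReal q • Measure.dirac y) :=
      (integrable_dirac (by simp)).smul_measure ENNReal.ofReal_ne_top
    refine ⟨i1.add_measure i2, ?_⟩
    rw [integral_add_measure i1 i2, integral_smul_measure, integral_smul_measure, integral_dirac,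
      integral_dirac, ENNReal.toReal_ofReal hq1'.le, ENNReal.toReal_ofReal hq0.le]
    simp
  have hex : (1 - q) * (μ - x) = d / 2 := by rw [hxdef, lo]; field_simp; ring
  have hey : q * (y - μ) = d / 2 := by rw [hydef, hi]; field_simp; ring
  refine ⟨⟨M, hMp⟩, ⟨⟨?_, (hintg _).1, ?_, ?_⟩, x, y, hxy, ?_, ?_, ?_⟩, ?_, ?_⟩
  · simp [M, hlo, show 0 ≤ y by linarith]
  · simp only [ProbabilityMeasure.coe_mk]
    rw [(hintg _).2]; linarith
  · simp only [ProbabilityMeasure.coe_mk]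
    rw [(hintg _).2, abs_of_neg (by linarith), abs_of_pos (by linarith)]; linarith
  · simp [M]
  · simp [M, hq1]
  · simp [M, hq0]
  · rw [ae_iff]; simp [M]
  · simp [M, Measure.real, hxy.symm, hq0.le]

/-- If `m x < p`, a sale requires some valuation to differ from `x`; the union bound applies. -/
lemma BUND_le_of_tail {m : ℕ} {p x q : ℝ} (hp : 0 ≤ p) (hpx : m * x < p)
    {Q : ProbabilityMeasure ℝ} (hQ : (Q : Measure ℝ).real {x}ᶜ = q) :
    BUND p (jointMeasure (fun _ : Fin m => Q)) ≤ p * (m * q) := by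
  refine mul_le_mul_of_nonneg_left ?_ hp
  have hsub : {v : Fin m → ℝ | p ≤ ∑ i, v i} ⊆ ⋃ i, Function.eval i ⁻¹' {x}ᶜ := by
    intro v hv
    by_contra hcon
    simp only [mem_iUnion, mem_preimage, mem_compl_iff, mem_singleton_iff, Function.eval,
      not_exists, not_not] at hcon
    have : p ≤ ∑ i, v i := hv
    simp only [hcon] at this
    simp at this
    linarith
  have h1 : (jointMeasure (fun _ : Fin m => Q)).real {v | p ≤ ∑ i, v i} ≤
      ∑ i, (jointMeasure (fun _ : Fin m => Q)).real (Function.eval i ⁻¹' {x}ᶜ) :=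
    (measureReal_mono hsub).trans (measureReal_iUnion_fintype_le _)
  have h2 : ∀ i, (jointMeasure (fun _ : Fin m => Q)).real (Function.eval i ⁻¹' {x}ᶜ) = q := by
    intro i
    rw [← hQ]
    exact (measurePreserving_eval (fun _ : Fin m => (Q : Measure ℝ)) i).measureReal_preimage
      (measurableSet_singleton x).compl.nullMeasurableSet
  simp only [h2, Finset.sum_const, Finset.card_univ, Fintype.card_fin, nsmul_eq_mul] at h1
  exact h1

lemma BUND_eq_of_ae {m : ℕ} {x : ℝ} {Q : ProbabilityMeasure ℝ}
    (hQ : ∀ᵐ t ∂(Q : Measure ℝ), x ≤ t) :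
    BUND (m * x) (jointMeasure (fun _ : Fin m => Q)) = m * x := by
  have : (jointMeasure (fun _ : Fin m => Q)) {v | m * x ≤ ∑ i, v i} = 1 := by
    rw [← measure_univ (μ := jointMeasure (fun _ : Fin m => Q))]
    refine measure_congr ?_
    rw [eventuallyEq_univ]
    filter_upwards [ae_joint (fun _ : Fin m => Q) (fun _ => hQ)] with v hv
    have := Finset.sum_le_sum fun i (_ : i ∈ Finset.univ) => hv i
    simpa using this
  simp [BUND, this]

/-! ### The limit -/

lemma bddBelow_ratios {μ d : ℝ} {A : Set (ProbabilityMeasure ℝ)} (hA : A ⊆ MeanMAD μ d)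
    (m : ℕ) {p : ℝ} (hp : 0 ≤ p) :
    BddBelow {s | ∃ P : Fin m → ProbabilityMeasure ℝ, (∀ i, P i ∈ A) ∧
      s = BUND p (jointMeasure P) / OPT m (jointMeasure P)} := by
  refine ⟨0, ?_⟩
  rintro s ⟨P, hP, rfl⟩
  exact div_nonneg (BUND_nonneg hp _) (OPT_nonneg fun i => hA (hP i))

/-- Worst-case ratio at a price of at least `m (μ - d / 2)`: the two-point law with a vanishing mass `q`
on a far upper atom makes the bundle almost unsellable, while the lower atoms keep `OPT` of
order `m`. Any positive `δ` is an upper bound. -/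
lemma sInf_le_of_high_price {μ d : ℝ} (hμ : 0 < μ) (hd0 : 0 < d) (hd : d < 2 * μ)
    {A : Set (ProbabilityMeasure ℝ)} (hA : A ⊆ MeanMAD μ d) (hA2 : MeanMAD2 μ d ⊆ A)
    {m : ℕ} (hm : 0 < m) {p δ : ℝ} (hδ : 0 < δ) (hp : m * (μ - d / 2) ≤ p) :
    sInf {s | ∃ P : Fin m → ProbabilityMeasure ℝ, (∀ i, P i ∈ A) ∧
      s = BUND p (jointMeasure P) / OPT m (jointMeasure P)} ≤ δ := by
  have hm' : (0 : ℝ) < m := by exact_mod_cast hm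
  have hp0 : 0 < p := lt_of_lt_of_le (mul_pos hm' (by linarith)) hp
  set x₀ := lo μ d ((1 - d / (2 * μ)) / 2) with hx₀
  have hβ : d / (2 * μ) < 1 := by rw [div_lt_one (by positivity)]; exact hd
  have hβ0 : 0 < d / (2 * μ) := by positivity
  have hx₀pos : 0 < x₀ := by
    rw [hx₀, lo, sub_pos, div_lt_iff₀ (by linarith)]
    have : d / (2 * μ) * (2 * μ) = d := by field_simp
    nlinarith
  -- the first bound keeps the lower atom above `x₀`, the second makes `p q / x₀` at most `δ`
  set q := min ((1 - d / (2 * μ)) / 2) (δ * x₀ / p) with hq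
  have hq0 : 0 < q := lt_min (by linarith) (by positivity)
  have hqle : q ≤ (1 - d / (2 * μ)) / 2 := min_le_left _ _
  have hqle2 : p * q ≤ δ * x₀ := by
    have : q ≤ δ * x₀ / p := min_le_right _ _
    rwa [le_div_iff₀ hp0, mul_comm] at this
  have hq1 : q < 1 := by linarith
  have hxle : x₀ ≤ lo μ d q := by
    rw [hx₀, lo, lo]
    gcongr
    linarith
  obtain ⟨Q, hQ, hQae, hQq⟩ := exists_twoPoint hd0 hq0 hq1 (hx₀pos.le.trans hxle)
  have hlo : lo μ d q < μ - d / 2 := by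
    rw [lo]
    have : d / 2 < d / (2 * (1 - q)) := by gcongr; linarith
    linarith
  have hlohi : lo μ d q ≤ hi μ d q := by
    unfold hi
    have : 0 < d / (2 * q) := by positivity
    linarith
  have hlt : m * lo μ d q < p := lt_of_lt_of_le (by gcongr) hp
  refine (csInf_le (bddBelow_ratios hA m hp0.le) ⟨fun _ => Q, fun _ => hA2 hQ, rfl⟩).trans ?_
  have hO : m * x₀ ≤ OPT m (jointMeasure (fun _ : Fin m => Q)) := by
    have h1 := BUND_le_OPT (m := m) (P := fun _ => Q) (fun _ => hQ.1) (p := m * lo μ d q)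
      (mul_nonneg hm'.le (hx₀pos.le.trans hxle))
    rw [BUND_eq_of_ae (hQae.mono fun t ht => by rcases ht with rfl | rfl <;> simp [hlohi])] at h1
    exact (mul_le_mul_of_nonneg_left hxle hm'.le).trans h1
  rw [div_le_iff₀ (lt_of_lt_of_le (by positivity) hO)]
  calc _ ≤ p * (m * q) := BUND_le_of_tail hp0.le hlt hQq
    _ = m * (p * q) := by ring
    _ ≤ m * (δ * x₀) := by gcongr
    _ = δ * (m * x₀) := by ring
    _ ≤ _ := by gcongr

/-- At low prices the bundle sells for at most `m (μ - d / 2)`, whereas for a fixed bounded two-point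
law `OPT` is asymptotically `m μ`. -/
lemma eventually_sInf_le {μ d L : ℝ} (hμ : 0 < μ) (hd0 : 0 < d) (hd : d < 2 * μ)
    (hL0 : 0 < L) (hL : L < μ)
    {A : Set (ProbabilityMeasure ℝ)} (hA : A ⊆ MeanMAD μ d) (hA2 : MeanMAD2 μ d ⊆ A) :
    ∀ᶠ m : ℕ in atTop, ∀ p : ℝ, 0 ≤ p →
    sInf {s | ∃ P : Fin m → ProbabilityMeasure ℝ, (∀ i, P i ∈ A) ∧
      s = BUND p (jointMeasure P) / OPT m (jointMeasure P)} ≤ (μ - d / 2) / L := by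
  set q := 1 - d / (2 * μ) with hq
  have hβ : d / (2 * μ) < 1 := by rw [div_lt_one (by positivity)]; exact hd
  have hβ0 : 0 < d / (2 * μ) := by positivity
  -- this `q` is the extreme case: the lower atom is `0`
  have hlo : lo μ d q = 0 := lo_extreme hd0
  obtain ⟨Q, hQ, hQae, -⟩ := exists_twoPoint (μ := μ) (q := q) hd0 (by linarith) (by linarith) hlo.ge
  have hhi : 0 ≤ hi μ d q := by
    have : 0 < q := by linarith
    unfold hi; positivity
  obtain ⟨K, hK0, hK⟩ := exists_price (B := hi μ d q) hμ hL
  filter_upwards [hK, eventually_gt_atTop 0] with m hm hmpos p hp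
  have hm' : (0 : ℝ) < m := by exact_mod_cast hmpos
  rcases le_total (m * (μ - d / 2)) p with h | h
  · exact sInf_le_of_high_price hμ hd0 hd hA hA2 hmpos (div_pos (by linarith) hL0) h
  · refine (csInf_le (bddBelow_ratios hA m hp) ⟨fun _ => Q, fun _ => hA2 hQ, rfl⟩).trans ?_
    have h1 : m * L ≤ OPT m (jointMeasure (fun _ : Fin m => Q)) := by
      refine (hm (fun _ => Q) (fun x => x) measurable_id (fun _ => ?_)
        (fun _ => hQ.1.2.2.1)).trans (BUND_le_OPT (fun _ => hQ.1) (by positivity))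
      filter_upwards [hQae] with t ht
      rcases ht with rfl | rfl <;> simp [hlo, hhi]
    rw [div_le_iff₀ (lt_of_lt_of_le (by positivity) h1)]
    calc _ ≤ p := BUND_le hp _
      _ ≤ m * (μ - d / 2) := h
      _ = (μ - d / 2) / L * (m * L) := by field_simp
      _ ≤ _ := by
        have : 0 ≤ (μ - d / 2) / L := div_nonneg (by linarith) hL0.le
        gcongr

/-- At price just below `m (μ - d / 2)`, the sum of the truncated valuations `min (v i) μ`
concentrates above the price, for all marginals in the ambiguity set. -/
lemma eventually_le_sInf {μ d L : ℝ} (hμ : 0 < μ) (hd : d < 2 * μ) (hL0 : 0 ≤ L)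
    (hL : L < μ - d / 2)
    {A : Set (ProbabilityMeasure ℝ)} (hA : A ⊆ MeanMAD μ d) (hne : A.Nonempty) :
    ∃ K, 0 ≤ K ∧ ∀ᶠ m : ℕ in atTop, L / μ ≤
    sInf {s | ∃ P : Fin m → ProbabilityMeasure ℝ, (∀ i, P i ∈ A) ∧
      s = BUND (m * K) (jointMeasure P) / OPT m (jointMeasure P)} := by
  obtain ⟨K, hK0, hK⟩ := exists_price (B := μ) (c := μ - d / 2) (by linarith) hL
  refine ⟨K, hK0, ?_⟩
  filter_upwards [hK, eventually_gt_atTop 0] with m hm hmpos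
  have hm' : (0 : ℝ) < m := by exact_mod_cast hmpos
  obtain ⟨Q, hQ⟩ := hne
  refine le_csInf ⟨_, fun _ => Q, fun _ => hQ, rfl⟩ ?_
  rintro s ⟨P, hP, rfl⟩
  have hPA := fun i => hA (hP i)
  have h1 : m * L ≤ BUND (m * K) (jointMeasure P) := by
    refine hm P (fun x => min x μ) (by fun_prop) (fun i => ?_) (fun i => integral_min (hPA i))
    filter_upwards [ae_nonneg_of_mem (hPA i)] with x hx
    exact ⟨⟨le_min hx hμ.le, min_le_right _ _⟩, min_le_left _ _⟩
  have h2 := BUND_le_OPT hPA (p := m * K) (by positivity)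
  rcases hL0.eq_or_lt with rfl | hLpos
  · rw [zero_div]
    exact div_nonneg (BUND_nonneg (by positivity) _) (OPT_nonneg hPA)
  have h3 : 0 < OPT m (jointMeasure P) := lt_of_lt_of_le (by positivity) (h1.trans h2)
  calc L / μ = m * L / (m * μ) := by field_simp
    _ ≤ _ := by
      have h4 := OPT_le hPA
      have h5 := BUND_nonneg (p := m * K) (by positivity) (jointMeasure P)
      gcongr

/-- The limit is the same for every ambiguity set between the two-point and the full one. -/
lemma ratio_tendsto_of_between {μ d : ℝ} (hμ : 0 < μ) (hd0 : 0 < d) (hd : d < 2 * μ)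
    {A : Set (ProbabilityMeasure ℝ)} (hA : A ⊆ MeanMAD μ d) (hA2 : MeanMAD2 μ d ⊆ A) :
    Tendsto (fun m : ℕ => ratioVal A m) atTop (nhds (1 - d / (2 * μ))) := by
  have hlimit : 1 - d / (2 * μ) = (μ - d / 2) / μ := by field_simp
  have hpos : 0 < μ - d / 2 := by linarith
  rw [hlimit, tendsto_order]
  constructor
  · intro a ha
    obtain ⟨L, hL1, hL2⟩ := exists_between (max_lt ((lt_div_iff₀ hμ).mp ha) hpos)
    have haL : a < L / μ := (lt_div_iff₀ hμ).mpr ((le_max_left _ _).trans_lt hL1)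
    have hL0 : 0 < L := (le_max_right _ _).trans_lt hL1
    have hne : A.Nonempty := by
      have hβ : d / (2 * μ) < 1 := by rw [div_lt_one (by positivity)]; exact hd
      have hβ0 : 0 < d / (2 * μ) := by positivity
      obtain ⟨Q, hQ, -⟩ := exists_twoPoint (μ := μ) (q := 1 - d / (2 * μ)) hd0 (by linarith)
        (by linarith) (lo_extreme hd0).ge
      exact ⟨Q, hA2 hQ⟩
    obtain ⟨K, hK0, hK⟩ := eventually_le_sInf hμ hd hL0.le hL2 hA hne
    filter_upwards [hK, eventually_sInf_le hμ hd0 hd (L := μ / 2) (by linarith) (by linarith) hA hA2]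
      with m h1 h2
    refine haL.trans_le (h1.trans (le_csSup ?_ ⟨m * K, by positivity, rfl⟩))
    refine ⟨(μ - d / 2) / (μ / 2), ?_⟩
    rintro r ⟨p, hp, rfl⟩
    exact h2 p hp
  · intro a ha
    have ha0 : 0 < a := (div_pos hpos hμ).trans ha
    obtain ⟨L, hL1, hL2⟩ := exists_between ((div_lt_comm₀ hμ ha0).mp ha)
    have hL0 : 0 < L := (div_pos hpos ha0).trans hL1
    filter_upwards [eventually_sInf_le hμ hd0 hd hL0 hL2 hA hA2] with m h2
    refine lt_of_le_of_lt (csSup_le ⟨_, 0, le_rfl, rfl⟩ ?_) ((div_lt_comm₀ ha0 hL0).mp hL1)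
    rintro r ⟨p, hp, rfl⟩
    exact h2 p hp

/-- Theorem 4 (ratio objective): the robust bundling ratio value converges to `1 - d/(2μ)`,
both under the full mean-MAD ambiguity set and under two-point distributions. -/
theorem ratio_tendsto (μ d : ℝ) (hμ : 0 < μ) (hd0 : 0 < d) (hd : d < 2 * μ) :
    Tendsto (fun m : ℕ => ratioVal (MeanMAD μ d) m) atTop (nhds (1 - d / (2 * μ))) ∧
    Tendsto (fun m : ℕ => ratioVal (MeanMAD2 μ d) m) atTop (nhds (1 - d / (2 * μ))) := by
  exact ⟨ratio_tendsto_of_between hμ hd0 hd subset_rfl (fun _ h => h.1),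
    ratio_tendsto_of_between hμ hd0 hd (fun _ h => h.1) subset_rfl⟩

end
end
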